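/- arXiv:math/0105255 — 4 statements merged into one kernel-verified Lean document; each statement's English description precedes it below -/
import Mathlib

section
/- Let A be an associative unital algebra over a commutative ring k, let a ∈ k be invertible, set δ = -a² - a⁻², and let P, Q ∈ A satisfy P² = δ·P, Q² = δ·Q, P Q P = P, and Q P Q = Q. Then (a·1 + a⁻¹·P)(a·1 + a⁻¹·Q)(a·1 + a⁻¹·P) = a³·1 + a·(P + Q) + a⁻¹·(P Q + Q P). -/
section Expansion

variable {k A : Type*} [CommSemiring k] [Semiring A] [Algebra k A]

theorem smul_one_add_smul_triple_product (a b : k) (P Q : A) :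
    (a • (1 : A) + b • P) * (a • (1 : A) + b • Q) * (a • (1 : A) + b • P) =
      a ^ 3 • (1 : A) + (a ^ 2 * b) • (P + P + Q) + (a * b ^ 2) • (P * P + P * Q + Q * P) +
        b ^ 3 • (P * Q * P) := by
  simp only [add_mul, mul_add, smul_mul_assoc, mul_smul_comm, one_mul, mul_one, smul_add,
    smul_smul]
  module

theorem smul_one_add_smul_triple_product_of_mul_self_eq_smul (a b : k) {δ : k} {P Q : A}
    (hP : P * P = δ • P) (hPQP : P * Q * P = P) :
    (a • (1 : A) + b • P) * (a • (1 : A) + b • Q) * (a • (1 : A) + b • P) =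
      a ^ 3 • (1 : A) + (2 * (a ^ 2 * b) + a * b ^ 2 * δ + b ^ 3) • P + (a ^ 2 * b) • Q +
        (a * b ^ 2) • (P * Q + Q * P) := by
  rw [smul_one_add_smul_triple_product, hP, hPQP]
  module

end Expansion

theorem triple_product_symmetric_form_general {k A : Type*} [CommRing k] [Ring A] [Algebra k A]
    (a : kˣ) (δ : k) (hδ : δ = -(a : k) ^ 2 - ((a⁻¹ : kˣ) : k) ^ 2)
    (P Q : A) (hP : P * P = δ • P) (hPQP : P * Q * P = P) :
    ((a : k) • (1 : A) + ((a⁻¹ : kˣ) : k) • P) *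
      ((a : k) • (1 : A) + ((a⁻¹ : kˣ) : k) • Q) *
      ((a : k) • (1 : A) + ((a⁻¹ : kˣ) : k) • P) =
    ((a : k) ^ 3) • (1 : A) + (a : k) • (P + Q) + ((a⁻¹ : kˣ) : k) • (P * Q + Q * P) := by
  have coeff_Q : (a : k) ^ 2 * ((a⁻¹ : kˣ) : k) = a := by
    linear_combination (a : k) * a.mul_inv
  have coeff_PQ : (a : k) * ((a⁻¹ : kˣ) : k) ^ 2 = ((a⁻¹ : kˣ) : k) := by
    linear_combination ((a⁻¹ : kˣ) : k) * a.mul_inv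
  -- The value of `δ` is chosen so that `a⁻¹δ = -a - a⁻³`, giving `P` the same coefficient as `Q`.
  have coeff_P : 2 * (a : k) + ((a⁻¹ : kˣ) : k) * δ + ((a⁻¹ : kˣ) : k) ^ 3 = a := by
    rw [hδ]
    linear_combination -(a : k) * a.mul_inv
  rw [smul_one_add_smul_triple_product_of_mul_self_eq_smul _ _ hP hPQP, coeff_Q, coeff_PQ,
    coeff_P, smul_add (a : k) P Q, ← add_assoc (_ ^ 3 • 1)]

/-- With `a ∈ k` invertible, `δ = -a² - a⁻²`, and `P, Q` satisfying
the Temperley–Lieb relations `P² = δP`, `Q² = δQ`, `PQP = P`, `QPQ = Q`, one has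
`(a·1 + a⁻¹·P)(a·1 + a⁻¹·Q)(a·1 + a⁻¹·P) = a³·1 + a·(P + Q) + a⁻¹·(PQ + QP)`. -/
theorem triple_product_symmetric_form {k A : Type*} [CommRing k] [Ring A] [Algebra k A]
    (a : kˣ) (δ : k) (hδ : δ = -(a : k) ^ 2 - ((a⁻¹ : kˣ) : k) ^ 2)
    (P Q : A)
    (hP : P * P = δ • P) (hQ : Q * Q = δ • Q)
    (hPQP : P * Q * P = P) (hQPQ : Q * P * Q = Q) :
    ((a : k) • (1 : A) + ((a⁻¹ : kˣ) : k) • P) *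
      ((a : k) • (1 : A) + ((a⁻¹ : kˣ) : k) • Q) *
      ((a : k) • (1 : A) + ((a⁻¹ : kˣ) : k) • P) =
    ((a : k) ^ 3) • (1 : A) + (a : k) • (P + Q) + ((a⁻¹ : kˣ) : k) • (P * Q + Q * P) :=
  triple_product_symmetric_form_general a δ hδ P Q hP hPQP
end

section
/- Let A be an associative unital algebra over a commutative ring k, let a ∈ k be invertible, set δ = -a² - a⁻², and let P, Q ∈ A satisfy P² = δ·P, Q² = δ·Q, P Q P = P, and Q P Q = Q. Then the elements ρ(σ) = a·1 + a⁻¹·P and ρ(τ) = a·1 + a⁻¹·Q satisfy the braid relation ρ(σ) ρ(τ) ρ(σ) = ρ(τ) ρ(σ) ρ(τ). -/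
/-!
For arbitrary `P` and `Q`, expanding the two braid words of `x·1 + y·P` and `x·1 + y·Q` and
subtracting cancels every term symmetric in `P` and `Q`; what survives is a combination of `P - Q`,
`P² - Q²` and `PQP - QPQ`. The Temperley–Lieb relations turn each of these into a multiple of
`P - Q`, with total coefficient `x²y + xy²δ + y³`. If `y = x⁻¹`, this is `x + x⁻¹δ + x⁻³`, and
`δ = -x² - x⁻²` is precisely the value at which it vanishes.
-/

section BraidDefect

variable {k A : Type*} [CommRing k] [Ring A] [Algebra k A]

theorem smul_one_add_smul_braid_sub_braid (x y : k) (P Q : A) :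
    (x • (1 : A) + y • P) * (x • (1 : A) + y • Q) * (x • (1 : A) + y • P) -
        (x • (1 : A) + y • Q) * (x • (1 : A) + y • P) * (x • (1 : A) + y • Q) =
      (x ^ 2 * y) • (P - Q) + (x * y ^ 2) • (P * P - Q * Q) +
        y ^ 3 • (P * Q * P - Q * P * Q) := by
  simp only [add_mul, mul_add, smul_mul_assoc, mul_smul_comm, one_mul, mul_one]
  module

theorem smul_one_add_smul_braid_sub_braid_eq_smul_sub (x y δ : k) {P Q : A}
    (hsq : P * P - Q * Q = δ • (P - Q)) (hbraid : P * Q * P - Q * P * Q = P - Q) :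
    (x • (1 : A) + y • P) * (x • (1 : A) + y • Q) * (x • (1 : A) + y • P) -
        (x • (1 : A) + y • Q) * (x • (1 : A) + y • P) * (x • (1 : A) + y • Q) =
      (x ^ 2 * y + x * y ^ 2 * δ + y ^ 3) • (P - Q) := by
  rw [smul_one_add_smul_braid_sub_braid, hsq, hbraid, smul_smul, ← add_smul, ← add_smul]

theorem braid_coeff_eq_zero_of_mul_eq_one {x y : k} (hxy : x * y = 1) :
    x ^ 2 * y + x * y ^ 2 * (-x ^ 2 - y ^ 2) + y ^ 3 = 0 := by
  calc
    x ^ 2 * y + x * y ^ 2 * (-x ^ 2 - y ^ 2) + y ^ 3 = (x ^ 2 * y + y ^ 3) * (1 - x * y) := by ring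
    _ = 0 := by rw [hxy, sub_self, mul_zero]

/-- This covers the Hecke algebra of type `A₂`, of which the three-strand Temperley–Lieb algebra is
a quotient: there `P * P = δ • P`, `Q * Q = δ • Q` and `P * Q * P - P = Q * P * Q - Q`. -/
theorem temperley_lieb_braid_relation_general (a : kˣ) (δ : k)
    (hδ : δ = -(a : k) ^ 2 - ((a⁻¹ : kˣ) : k) ^ 2) (P Q : A)
    (hsq : P * P - Q * Q = δ • (P - Q)) (hbraid : P * Q * P - Q * P * Q = P - Q)
    (ρσ ρτ : A)
    (hσ : ρσ = (a : k) • (1 : A) + ((a⁻¹ : kˣ) : k) • P)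
    (hτ : ρτ = (a : k) • (1 : A) + ((a⁻¹ : kˣ) : k) • Q) :
    ρσ * ρτ * ρσ = ρτ * ρσ * ρτ := by
  rw [hσ, hτ, ← sub_eq_zero, smul_one_add_smul_braid_sub_braid_eq_smul_sub _ _ δ hsq hbraid, hδ,
    braid_coeff_eq_zero_of_mul_eq_one a.mul_inv, zero_smul]

end BraidDefect

/-- With `a ∈ k` invertible, `δ = -a² - a⁻²`, and `P, Q` satisfying
the Temperley–Lieb relations, the elements `ρ(σ) = a·1 + a⁻¹·P` and
`ρ(τ) = a·1 + a⁻¹·Q` satisfy the braid relation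
`ρ(σ)ρ(τ)ρ(σ) = ρ(τ)ρ(σ)ρ(τ)`. -/
theorem temperley_lieb_braid_relation {k A : Type*} [CommRing k] [Ring A] [Algebra k A]
    (a : kˣ) (δ : k) (hδ : δ = -(a : k) ^ 2 - ((a⁻¹ : kˣ) : k) ^ 2)
    (P Q : A)
    (hP : P * P = δ • P) (hQ : Q * Q = δ • Q)
    (hPQP : P * Q * P = P) (hQPQ : Q * P * Q = Q)
    (ρσ ρτ : A)
    (hσ : ρσ = (a : k) • (1 : A) + ((a⁻¹ : kˣ) : k) • P)
    (hτ : ρτ = (a : k) • (1 : A) + ((a⁻¹ : kˣ) : k) • Q) :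
    ρσ * ρτ * ρσ = ρτ * ρσ * ρτ := by
  exact temperley_lieb_braid_relation_general a δ hδ P Q
    (by rw [hP, hQ, smul_sub]) (by rw [hPQP, hQPQ]) ρσ ρτ hσ hτ
end

section
/- Let A be a nonzero complex number, let M be the 2×2 complex matrix with rows (0, iA) and (-iA⁻¹, 0), and define the 4×4 matrices R and R̄ indexed by pairs (a,b), (c,d) ∈ {0,1}×{0,1} by R_{(a,b),(c,d)} = A·M_{ab}·M_{cd} + A⁻¹·δ_{ac}·δ_{bd} and R̄_{(a,b),(c,d)} = A⁻¹·M_{ab}·M_{cd} + A·δ_{ac}·δ_{bd}, where δ denotes the Kronecker delta. Then R·R̄ = I₄, the 4×4 identity matrix. -/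
open Matrix Complex

/-!
A crossing is `A • U + A⁻¹ • 1`, where `U` (a cap followed by a cup) satisfies `U * U = δ • U`,
`δ` being the amplitude of a closed loop. In the product of a crossing with the opposite one,
`U` has coefficient `δ + A² + A⁻²`, which vanishes exactly because `δ = -A² - A⁻²`.
Here `U` is the rank-one matrix `v vᵀ` of the vector `v` of entries of `M`, so that
`δ = v ⬝ v = tr (M Mᵀ)`.
-/

section Crossing

variable {K S : Type*} [CommRing K] [Ring S] [Algebra K S]

/-- The value `-A² - A⁻²` of a closed loop in the Kauffman bracket with variable `A`. -/
def loopValue (A : Kˣ) : K :=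
  -(A : K) ^ 2 - (↑A⁻¹ : K) ^ 2

/-- The expansion of a crossing in the Kauffman bracket, with `U` standing for the cup-cap tangle
and `1` for two parallel strands. The opposite crossing is obtained by replacing `A` with `A⁻¹`. -/
def crossing (A : Kˣ) (U : S) : S :=
  (A : K) • U + (↑A⁻¹ : K) • (1 : S)

theorem crossing_mul_crossing_inv (A : Kˣ) {U : S} (hU : U * U = loopValue A • U) :
    crossing A U * crossing A⁻¹ U = 1 := by
  have expand : crossing A U * crossing A⁻¹ U =
      U * U + ((A : K) ^ 2 + (↑A⁻¹ : K) ^ 2) • U + 1 := by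
    simp only [crossing, inv_inv, add_mul, mul_add, smul_mul_smul_comm, mul_one, one_mul,
      Units.mul_inv, Units.inv_mul, one_smul]
    module
  have cancel : loopValue A + ((A : K) ^ 2 + (↑A⁻¹ : K) ^ 2) = 0 := by
    rw [loopValue]
    ring
  rw [expand, hU, ← add_smul, cancel, zero_smul, zero_add]

end Crossing

section CupCap

variable {K m n : Type*} [CommRing K]

/-- The cup-cap operator whose cup and cap both have amplitudes `M a b`. As `Matrix.vec` lists
entries column by column, it is applied to `Mᵀ` in order that `(a, b)` index the entry `M a b`. -/
def cupCap (M : Matrix m n K) : Matrix (m × n) (m × n) K :=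
  vecMulVec (vec Mᵀ) (vec Mᵀ)

variable [Fintype m] [Fintype n]

theorem cupCap_mul_self (M : Matrix m n K) :
    cupCap M * cupCap M = trace (M * Mᵀ) • cupCap M := by
  rw [cupCap, vecMulVec_mul_vecMulVec, vec_dotProduct_vec, transpose_transpose, vecMulVec_smul]

variable [DecidableEq m] [DecidableEq n]

theorem eq_crossing_cupCap_iff {A : Kˣ} {M : Matrix m n K} {R : Matrix (m × n) (m × n) K} :
    R = crossing A (cupCap M) ↔ ∀ p q, R p q =
      A * M p.1 p.2 * M q.1 q.2 +
        ↑A⁻¹ * (if p.1 = q.1 then 1 else 0) * (if p.2 = q.2 then 1 else 0) := by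
  simp only [← Matrix.ext_iff, crossing, cupCap, Matrix.add_apply, Matrix.smul_apply,
    vecMulVec_apply, vec, transpose_apply, one_apply, smul_eq_mul, Prod.ext_iff, ite_and,
    mul_assoc, ite_mul, one_mul, zero_mul]

theorem bracket_R_matrix_inverse_general (A : Kˣ) (M : Matrix m n K)
    (hM : trace (M * Mᵀ) = loopValue A) :
    crossing A (cupCap M) * crossing A⁻¹ (cupCap M) = 1 :=
  crossing_mul_crossing_inv A (hM ▸ cupCap_mul_self M)

end CupCap

theorem trace_mul_transpose_eq_loopValue {K : Type*} [CommRing K] {i : K} (hi : i ^ 2 = -1)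
    (A : Kˣ) :
    trace (!![0, i * A; -i * ↑A⁻¹, 0] * !![0, i * A; -i * ↑A⁻¹, 0]ᵀ) = loopValue A := by
  calc
    _ = i ^ 2 * ((A : K) ^ 2 + (↑A⁻¹ : K) ^ 2) := by
      simp only [trace_fin_two, mul_apply, Fin.sum_univ_two, transpose_apply, of_apply, cons_val]
      ring
    _ = loopValue A := by
      rw [hi, loopValue]
      ring

/-- With `M = [[0, iA],[-iA⁻¹, 0]]` (`A ≠ 0`), the bracket
R-matrices `R_{(a,b),(c,d)} = A·M_{ab}M_{cd} + A⁻¹·δ_{ac}δ_{bd}` and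
`R̄_{(a,b),(c,d)} = A⁻¹·M_{ab}M_{cd} + A·δ_{ac}δ_{bd}` satisfy `R·R̄ = I`
(invariance under the second Reidemeister move). -/
theorem bracket_R_matrix_inverse (A : ℂ) (hA : A ≠ 0)
    (M : Matrix (Fin 2) (Fin 2) ℂ)
    (hM : M = !![0, I * A; -I * A⁻¹, 0])
    (R Rbar : Matrix (Fin 2 × Fin 2) (Fin 2 × Fin 2) ℂ)
    (hR : ∀ p q : Fin 2 × Fin 2, R p q =
      A * M p.1 p.2 * M q.1 q.2 +
        A⁻¹ * (if p.1 = q.1 then 1 else 0) * (if p.2 = q.2 then 1 else 0))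
    (hRbar : ∀ p q : Fin 2 × Fin 2, Rbar p q =
      A⁻¹ * M p.1 p.2 * M q.1 q.2 +
        A * (if p.1 = q.1 then 1 else 0) * (if p.2 = q.2 then 1 else 0)) :
    R * Rbar = 1 := by
  subst hM
  rw [eq_crossing_cupCap_iff (A := Units.mk0 A hA).2 hR,
    eq_crossing_cupCap_iff (A := (Units.mk0 A hA)⁻¹).2 hRbar]
  exact bracket_R_matrix_inverse_general _ _
    (trace_mul_transpose_eq_loopValue I_sq (Units.mk0 A hA))
end

section
/- Let A be a nonzero complex number, set δ = -A² - A⁻², let n ≥ 2, let W₁, …, Wₙ be the standard basis column vectors of ℂⁿ, and for k = 1, …, n-1 define v_k = iA·W_k - iA⁻¹·W_{k+1} and U_k = v_k v_kᵗ (outer product using the plain transpose, without complex conjugation). Then: (1) U_k² = δ·U_k for all k; (2) U_k U_{k±1} U_k = U_k for all valid k; (3) U_k U_l = U_l U_k = 0 whenever |k - l| > 1. -/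
open Matrix

/-!
For scalars `p` and `q`, put `v k = p W_k + q W_{k+1}` and `U k = v k (v k)ᵗ`. A product of rank-one
matrices only sees the dot products of the vectors involved, so `U k * U l` is
`(v k ⬝ᵥ v l) • v k (v l)ᵗ`. The Gram matrix of the `v k` is tridiagonal, with `p² + q²` on the
diagonal and `p q` next to it; the Temperley–Lieb relations are what remains when `p q = 1`. Taking
`p = iA` and `q = -iA⁻¹` gives `p q = 1` and `p² + q² = -A² - A⁻²`.
-/

section Burau

variable {R : Type*} [CommSemiring R] {n : ℕ}

/-- The vector `p W_k + q W_{k+1}` in `Rⁿ⁺¹`, with `k` zero-based, whose outer square represents the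
`k`-th Temperley–Lieb generator. The two scalars are kept independent;
the paper has `p = iA` and `q = -iA⁻¹`. -/
def burauVec (p q : R) (k : Fin n) : Fin (n + 1) → R :=
  Pi.single k.castSucc p + Pi.single k.succ q

/-- The rank-one matrix `U_k = v_k v_kᵗ` representing the `k`-th Temperley–Lieb generator, with
`v_k = burauVec p q k`. It is idempotent only up to the factor `p² + q²`. -/
def burauProjector (p q : R) (k : Fin n) : Matrix (Fin (n + 1)) (Fin (n + 1)) R :=
  vecMulVec (burauVec p q k) (burauVec p q k)

variable (p q : R)

theorem burauVec_apply (k : Fin n) (j : Fin (n + 1)) :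
    burauVec p q k j =
      p * (if (j : ℕ) = k then 1 else 0) + q * (if (j : ℕ) = k + 1 then 1 else 0) := by
  simp [burauVec, Pi.single_apply, Fin.ext_iff]

theorem burauVec_dotProduct (k : Fin n) (w : Fin (n + 1) → R) :
    burauVec p q k ⬝ᵥ w = p * w k.castSucc + q * w k.succ := by
  rw [burauVec, add_dotProduct, single_dotProduct, single_dotProduct]

theorem burauVec_dotProduct_self (k : Fin n) :
    burauVec p q k ⬝ᵥ burauVec p q k = p ^ 2 + q ^ 2 := by
  simp [burauVec_dotProduct, burauVec_apply, sq]

theorem burauVec_dotProduct_of_dist_eq_one {k l : Fin n} (h : Nat.dist k l = 1) :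
    burauVec p q k ⬝ᵥ burauVec p q l = p * q := by
  wlog hkl : (l : ℕ) = k + 1 generalizing k l
  · rw [dotProduct_comm]
    exact this (Nat.dist_comm k l ▸ h) (by unfold Nat.dist at h; omega)
  have hk : (k : ℕ) ≠ k + 1 + 1 := by omega
  simp [burauVec_dotProduct, burauVec_apply, hkl, hk, mul_comm q p]

theorem burauVec_dotProduct_of_one_lt_dist {k l : Fin n} (h : 1 < Nat.dist k l) :
    burauVec p q k ⬝ᵥ burauVec p q l = 0 := by
  obtain ⟨hkl, hkl', hlk⟩ : (k : ℕ) ≠ l ∧ (k : ℕ) ≠ l + 1 ∧ (k : ℕ) + 1 ≠ l := by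
    unfold Nat.dist at h; omega
  simp [burauVec_dotProduct, burauVec_apply, hkl, hkl', hlk]

theorem burauProjector_mul_burauProjector (k l : Fin n) :
    burauProjector p q k * burauProjector p q l =
      (burauVec p q k ⬝ᵥ burauVec p q l) • vecMulVec (burauVec p q k) (burauVec p q l) := by
  rw [burauProjector, burauProjector, vecMulVec_mul_vecMulVec, vecMulVec_smul]

theorem burauProjector_mul_self (k : Fin n) :
    burauProjector p q k * burauProjector p q k = (p ^ 2 + q ^ 2) • burauProjector p q k := by
  rw [burauProjector_mul_burauProjector, burauVec_dotProduct_self, burauProjector]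

theorem burauProjector_mul_mul_of_dist_eq_one {k l : Fin n} (h : Nat.dist k l = 1) :
    burauProjector p q k * burauProjector p q l * burauProjector p q k =
      (p * q) ^ 2 • burauProjector p q k := by
  have hlk : Nat.dist l k = 1 := Nat.dist_comm k l ▸ h
  rw [burauProjector_mul_burauProjector, smul_mul_assoc, burauProjector, vecMulVec_mul_vecMulVec,
    vecMulVec_smul, smul_smul, burauVec_dotProduct_of_dist_eq_one p q h,
    burauVec_dotProduct_of_dist_eq_one p q hlk, sq]

theorem burauProjector_mul_of_one_lt_dist {k l : Fin n} (h : 1 < Nat.dist k l) :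
    burauProjector p q k * burauProjector p q l = 0 := by
  rw [burauProjector_mul_burauProjector, burauVec_dotProduct_of_one_lt_dist p q h, zero_smul]

variable {p q}

theorem burau_projectors_temperley_lieb_general (hpq : p * q = 1) :
    (∀ k : Fin n, burauProjector p q k * burauProjector p q k =
      (p ^ 2 + q ^ 2) • burauProjector p q k) ∧
    (∀ k l : Fin n, Nat.dist k l = 1 →
      burauProjector p q k * burauProjector p q l * burauProjector p q k =
        burauProjector p q k) ∧
    (∀ k l : Fin n, 1 < Nat.dist k l →
      burauProjector p q k * burauProjector p q l = 0 ∧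
        burauProjector p q l * burauProjector p q k = 0) := by
  refine ⟨burauProjector_mul_self p q, fun k l h => ?_, fun k l h => ⟨?_, ?_⟩⟩
  · rw [burauProjector_mul_mul_of_dist_eq_one p q h, hpq, one_pow, one_smul]
  · exact burauProjector_mul_of_one_lt_dist p q h
  · exact burauProjector_mul_of_one_lt_dist p q (Nat.dist_comm k l ▸ h)

end Burau

/-- With `A ≠ 0`, `δ = -A² - A⁻²`, standard basis vectors
`W₁, …, Wₙ` of `ℂⁿ`, `v_k = iA·W_k - iA⁻¹·W_{k+1}` and `U_k = v_k v_kᵗ`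
(plain, unconjugated transpose), for `k = 1, …, n-1` (indexed here by
`Fin (n-1)`, zero-based): `U_k² = δ·U_k`, `U_k U_{k±1} U_k = U_k`, and
`U_k U_l = U_l U_k = 0` for `|k - l| > 1`.  These matrices represent the
Temperley–Lieb algebra `TLₙ`. -/
theorem burau_projectors_temperley_lieb (A : ℂ) (hA : A ≠ 0)
    (n : ℕ) (hn : 2 ≤ n)
    (δ : ℂ) (hδ : δ = -A ^ 2 - A⁻¹ ^ 2)
    (v : Fin (n - 1) → Fin n → ℂ)
    (hv : ∀ (k : Fin (n - 1)) (j : Fin n), v k j =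
      Complex.I * A * (if (j : ℕ) = (k : ℕ) then 1 else 0) -
        Complex.I * A⁻¹ * (if (j : ℕ) = (k : ℕ) + 1 then 1 else 0))
    (U : Fin (n - 1) → Matrix (Fin n) (Fin n) ℂ)
    (hU : ∀ k, U k = vecMulVec (v k) (v k)) :
    (∀ k, U k * U k = δ • U k) ∧
    (∀ k l : Fin (n - 1), Nat.dist (k : ℕ) (l : ℕ) = 1 → U k * U l * U k = U k) ∧
    (∀ k l : Fin (n - 1), 1 < Nat.dist (k : ℕ) (l : ℕ) →
      U k * U l = 0 ∧ U l * U k = 0) := by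
  obtain ⟨m, rfl⟩ : ∃ m, n = m + 1 := Nat.exists_eq_add_of_le' (one_le_two.trans hn)
  have hpq : Complex.I * A * -(Complex.I * A⁻¹) = 1 := by
    rw [mul_neg, mul_mul_mul_comm, Complex.I_mul_I, mul_inv_cancel₀ hA, mul_one, neg_neg]
  have hloop : (Complex.I * A) ^ 2 + (-(Complex.I * A⁻¹)) ^ 2 = δ := by
    rw [hδ, neg_sq, mul_pow, mul_pow, Complex.I_sq]; ring
  have hvec : v = burauVec (Complex.I * A) (-(Complex.I * A⁻¹)) := by
    ext k j
    rw [hv, burauVec_apply, neg_mul, sub_eq_add_neg]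
  have hproj : U = burauProjector (Complex.I * A) (-(Complex.I * A⁻¹)) := by
    ext1 k
    rw [hU, hvec, burauProjector]
  rw [hproj, ← hloop]
  exact burau_projectors_temperley_lieb_general hpq
end
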